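/- arXiv:1309.1366 — 2 statements merged into one kernel-verified Lean document; each statement's English description precedes it below -/
import Mathlib

section
/- Let μ be a (K,d)-doubling Borel measure on a metric space (M,ρ) and let σ ∈ (d,∞). Then for all s, t ∈ (0,∞) and all x, y ∈ M: ∫_M D_{s,σ}(x,z) D_{t,σ}(z,y) dμ(z) ≤ (K²·2^{d+σ+1}/(1 − 2^{d−σ})) · max{(s/t)^d, (t/s)^d} · D_{max(s,t),σ}(x,y). -/
open MeasureTheory Metric
open scoped ENNReal

/-- The kernel `D_{δ,σ}(x,y) := (μ(B(x,δ)) μ(B(y,δ)))^{-1/2} (1 + δ⁻¹ ρ(x,y))^{-σ}`. -/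
noncomputable def Dkernel {M : Type*} [MetricSpace M] [MeasurableSpace M]
    (μ : Measure M) (δ σ : ℝ) (x y : M) : ℝ≥0∞ :=
  (μ (ball x δ) * μ (ball y δ)) ^ (-(1/2 : ℝ)) *
    ENNReal.ofReal ((1 + dist x y / δ) ^ (-σ))

/-!
Let `s ≤ t` and write `A`, `B`, `C` for `1 + ρ/t` evaluated at `(x, z)`, `(z, y)`, `(x, y)`. The
decay of the integrand relative to that of `D_{t,σ}(x, y)` is governed by `X = 2AB/C ≥ 1`, because
`(AB)^{-σ} = 2^σ C^{-σ} X^{-σ}`. On the half-space of points closer to `x` than to `y`, the dyadic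
shell `2^k ≤ X < 2^{k+1}` lies in the ball `B(z, (11/4) X(z) t)` around each of its points `z`.
Doubling bounds the volume factors at `z` by the inverse measure of that ball, hence by the inverse
measure of the shell, so the shell contributes a multiple of `2^{k(d-σ)}`. Summing the geometric
series over the two half-spaces gives the bound. Measuring shells by `X` instead of `A` is what
makes the radius small enough for the stated constant: `11/4 ≤ 2^{3/2}`, whereas shells in `A`
would need the radius `3At`.
-/

theorem setLIntegral_div_measure_le {α : Type*} [MeasurableSpace α] {μ : Measure α} {S : Set α}
    {U : α → Set α} {f : α → ℝ≥0∞} {c : ℝ≥0∞} (hf : ∀ z ∈ S, f z ≤ c) (hU : ∀ z ∈ S, S ⊆ U z) :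
    ∫⁻ z in S, f z / μ (U z) ∂μ ≤ c :=
  calc ∫⁻ z in S, f z / μ (U z) ∂μ
      ≤ ∫⁻ _ in S, c / μ S ∂μ :=
        setLIntegral_mono measurable_const fun z hz =>
          ENNReal.div_le_div (hf z hz) (measure_mono (hU z hz))
    _ = c / μ S * μ S := setLIntegral_const S _
    _ ≤ c := ENNReal.mul_le_of_le_div le_rfl

theorem ennreal_rpow_neg_le_of_le_mul {a b c : ℝ≥0∞} {p : ℝ} (hp : 0 ≤ p) (hc₀ : c ≠ 0)
    (hc : c ≠ ⊤) (h : a ≤ c * b) : b ^ (-p) ≤ c ^ p * a ^ (-p) := by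
  have hinv : b⁻¹ ≤ c * a⁻¹ := by
    rw [← div_eq_mul_inv, ENNReal.le_div_iff_mul_le (.inr hc₀) (.inr hc), mul_comm,
      ← div_eq_mul_inv]
    exact ENNReal.div_le_of_le_mul h
  calc b ^ (-p) = b⁻¹ ^ p := by rw [ENNReal.rpow_neg, ENNReal.inv_rpow]
    _ ≤ (c * a⁻¹) ^ p := ENNReal.rpow_le_rpow hinv hp
    _ = c ^ p * a ^ (-p) := by
      rw [ENNReal.mul_rpow_of_nonneg _ _ hp, ENNReal.rpow_neg, ENNReal.inv_rpow]

theorem add_mul_le_of_mul_le_two_mul {a b a' b' c : ℝ} (ha : 0 ≤ a) (hab : a ≤ b) (ha' : 0 ≤ a')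
    (hab' : a' ≤ b') (hc : c ≤ a + b) (hc' : c ≤ a' + b') (h : a' * b' ≤ 2 * (a * b)) :
    (a + a') * c ≤ 11 / 2 * (a * b) := by
  have hb : 0 ≤ b := ha.trans hab
  have ha'_sq : a' ^ 2 ≤ 2 * (a * b) := by nlinarith
  -- The crude bounds `a * c ≤ 2 * (a * b)` and `a' * c ≤ 4 * (a * b)` give `6` instead of `11 / 2`:
  -- the first improves if `b` is large against `a`, the second if `b` is comparable to `a`.
  rcases le_total (2 * a) b with hab₂ | hba₂
  · have hac : a * c ≤ 3 / 2 * (a * b) := by nlinarith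
    have ha'c : a' * c ≤ 4 * (a * b) := by nlinarith
    linarith
  · have hac : a * c ≤ 2 * (a * b) := by nlinarith
    have hsum_sq : (a + b) ^ 2 ≤ 9 / 2 * (a * b) := by nlinarith
    have ha'sum : a' * (a + b) ≤ 3 * (a * b) := by
      refine le_of_sq_le_sq ?_ (by positivity)
      calc (a' * (a + b)) ^ 2 = a' ^ 2 * (a + b) ^ 2 := mul_pow _ _ _
        _ ≤ 2 * (a * b) * (9 / 2 * (a * b)) := by gcongr
        _ = (3 * (a * b)) ^ 2 := by ring
    have ha'c : a' * c ≤ a' * (a + b) := by gcongr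
    nlinarith

section DetourRatio

variable {M : Type*} [PseudoMetricSpace M] {δ a : ℝ} {x y z w : M}

/-- The quantity `X = 2AB/C`, where `A`, `B`, `C` are the values of `1 + ρ/δ` at `(x, z)`, `(z, y)`
and `(x, y)`: it compares the decay along the detour from `x` to `y` through `z` with the decay
along the direct way. The factor `2` makes it at least `1`. -/
noncomputable def detourRatio (δ : ℝ) (x y z : M) : ℝ :=
  2 * ((1 + dist x z / δ) * (1 + dist z y / δ)) / (1 + dist x y / δ)

theorem detourRatio_comm (δ : ℝ) (x y z : M) : detourRatio δ x y z = detourRatio δ y x z := by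
  rw [detourRatio, detourRatio, dist_comm x z, dist_comm z y, dist_comm x y,
    mul_comm (1 + dist z x / δ)]

theorem one_add_dist_div_le_add (hδ : 0 < δ) (x y z : M) :
    1 + dist x y / δ ≤ (1 + dist x z / δ) + (1 + dist z y / δ) := by
  have h : dist x y / δ ≤ dist x z / δ + dist z y / δ := by
    rw [← add_div]
    gcongr
    exact dist_triangle x z y
  linarith

theorem one_le_detourRatio (hδ : 0 < δ) (x y z : M) : 1 ≤ detourRatio δ x y z := by
  have hxz : 0 ≤ dist x z / δ := by positivity
  have hzy : 0 ≤ dist z y / δ := by positivity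
  rw [detourRatio, one_le_div (by positivity)]
  nlinarith [one_add_dist_div_le_add hδ x y z]

theorem rpow_neg_mul_rpow_neg_eq_detourRatio (hδ : 0 < δ) (σ : ℝ) (x y z : M) :
    (1 + dist x z / δ) ^ (-σ) * (1 + dist z y / δ) ^ (-σ) =
      2 ^ σ * (1 + dist x y / δ) ^ (-σ) * detourRatio δ x y z ^ (-σ) := by
  have hC : 0 < 1 + dist x y / δ := by positivity
  rw [detourRatio, Real.div_rpow (by positivity) hC.le, Real.mul_rpow zero_le_two (by positivity),
    Real.mul_rpow (by positivity) (by positivity), Real.rpow_neg zero_le_two]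
  field_simp

theorem rpow_neg_mul_rpow_neg_le_detourRatio {s t σ : ℝ} (hs : 0 < s) (hst : s ≤ t) (hσ : 0 ≤ σ)
    (x y z : M) :
    (1 + dist x z / s) ^ (-σ) * (1 + dist z y / t) ^ (-σ) ≤
      2 ^ σ * (1 + dist x y / t) ^ (-σ) * detourRatio t x y z ^ (-σ) := by
  have ht : 0 < t := hs.trans_le hst
  rw [← rpow_neg_mul_rpow_neg_eq_detourRatio ht]
  gcongr ?_ * _
  exact Real.rpow_le_rpow_of_nonpos (by positivity) (by gcongr) (neg_nonpos.2 hσ)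

theorem dist_lt_of_detourRatio_le (hδ : 0 < δ) (hz : dist x z ≤ dist z y)
    (hw : dist x w ≤ dist w y) (h : detourRatio δ x y w ≤ 2 * detourRatio δ x y z) :
    dist w z < 11 / 4 * detourRatio δ x y z * δ := by
  have hC : 0 < 1 + dist x y / δ := by positivity
  have hprod : (1 + dist x w / δ) * (1 + dist w y / δ) ≤
      2 * ((1 + dist x z / δ) * (1 + dist z y / δ)) := by
    rw [detourRatio, detourRatio, ← mul_div_assoc, div_le_div_iff_of_pos_right hC] at h
    linarith
  have hsum : (1 + dist x z / δ) + (1 + dist x w / δ) ≤ 11 / 4 * detourRatio δ x y z := by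
    rw [detourRatio, ← mul_div_assoc, le_div_iff₀ hC]
    linarith [add_mul_le_of_mul_le_two_mul (by positivity) (by gcongr) (by positivity) (by gcongr)
      (one_add_dist_div_le_add hδ x y z) (one_add_dist_div_le_add hδ x y w) hprod]
  calc dist w z ≤ dist x w + dist x z := dist_triangle_left w z x
    _ < ((1 + dist x z / δ) + (1 + dist x w / δ)) * δ := by
      field_simp
      linarith
    _ ≤ 11 / 4 * detourRatio δ x y z * δ := by gcongr

/-- The dyadic shell `2 ^ k ≤ detourRatio δ x y z < 2 ^ (k + 1)`, restricted to the half-space of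
points `z` that are at least as close to `x` as to `y`. -/
def detourShell (δ : ℝ) (x y : M) (k : ℕ) : Set M :=
  {z | dist x z ≤ dist z y ∧ 2 ^ k ≤ detourRatio δ x y z ∧ detourRatio δ x y z < 2 ^ (k + 1)}

theorem detourShell_subset_ball (hδ : 0 < δ) {k : ℕ} (hz : z ∈ detourShell δ x y k) :
    detourShell δ x y k ⊆ ball z (11 / 4 * detourRatio δ x y z * δ) := by
  obtain ⟨hz, hkz, -⟩ := hz
  rintro w ⟨hw, -, hwk⟩
  rw [pow_succ'] at hwk
  exact dist_lt_of_detourRatio_le hδ hz hw (by linarith)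

theorem subset_iUnion_detourShell (hδ : 0 < δ) (x y : M) :
    {z | dist x z ≤ dist z y} ⊆ ⋃ k, detourShell δ x y k := fun z hz =>
  let ⟨k, hk⟩ := exists_nat_pow_near (one_le_detourRatio hδ x y z) one_lt_two
  Set.mem_iUnion.2 ⟨k, hz, hk⟩

variable [MeasurableSpace M]

theorem setLIntegral_detourShell_le (μ : Measure M) (hδ : 0 < δ) (ha : 0 < a) (x y : M)
    (k : ℕ) :
    ∫⁻ z in detourShell δ x y k,
      ENNReal.ofReal (detourRatio δ x y z ^ (-a)) /
        μ (ball z (11 / 4 * detourRatio δ x y z * δ)) ∂μ ≤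
      ENNReal.ofReal (2 ^ (-a)) ^ k := by
  refine setLIntegral_div_measure_le ?_ fun z hz => detourShell_subset_ball hδ hz
  rintro z ⟨-, hkz, -⟩
  rw [← ENNReal.ofReal_pow (by positivity), Real.rpow_pow_comm zero_le_two]
  exact ENNReal.ofReal_le_ofReal
    (Real.rpow_le_rpow_of_nonpos (by positivity) hkz (neg_nonpos.2 ha.le))

theorem setLIntegral_detourRatio_le (μ : Measure M) (hδ : 0 < δ) (ha : 0 < a) (x y : M) :
    ∫⁻ z in {z | dist x z ≤ dist z y},
      ENNReal.ofReal (detourRatio δ x y z ^ (-a)) /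
        μ (ball z (11 / 4 * detourRatio δ x y z * δ)) ∂μ ≤
      (1 - ENNReal.ofReal (2 ^ (-a)))⁻¹ := by
  calc _ ≤ ∫⁻ z in ⋃ k, detourShell δ x y k, _ ∂μ :=
        lintegral_mono_set (subset_iUnion_detourShell hδ x y)
    _ ≤ ∑' k, ∫⁻ z in detourShell δ x y k, _ ∂μ := lintegral_iUnion_le _ _
    _ ≤ ∑' k, ENNReal.ofReal (2 ^ (-a)) ^ k :=
      ENNReal.tsum_le_tsum (setLIntegral_detourShell_le μ hδ ha x y)
    _ = (1 - ENNReal.ofReal (2 ^ (-a)))⁻¹ := ENNReal.tsum_geometric _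

theorem lintegral_detourRatio_le (μ : Measure M) (hδ : 0 < δ) (ha : 0 < a) (x y : M) :
    ∫⁻ z, ENNReal.ofReal (detourRatio δ x y z ^ (-a)) /
        μ (ball z (11 / 4 * detourRatio δ x y z * δ)) ∂μ ≤
      ENNReal.ofReal (2 / (1 - 2 ^ (-a))) := by
  have hq : (2 : ℝ) ^ (-a) < 1 :=
    Real.rpow_lt_one_of_one_lt_of_neg one_lt_two (neg_neg_of_pos ha)
  have hx := setLIntegral_detourRatio_le μ hδ ha x y
  have hy := setLIntegral_detourRatio_le μ hδ ha y x
  simp only [detourRatio_comm δ y x] at hy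
  have hunion : {z | dist x z ≤ dist z y} ∪ {z | dist y z ≤ dist z x} = Set.univ :=
    Set.eq_univ_of_forall fun z => by
      simpa only [dist_comm z, Set.mem_union, Set.mem_ofPred_eq] using
        le_total (dist x z) (dist y z)
  rw [← setLIntegral_univ, ← hunion]
  calc _ ≤ _ := lintegral_union_le _ _ _
    _ ≤ (1 - ENNReal.ofReal (2 ^ (-a)))⁻¹ + (1 - ENNReal.ofReal (2 ^ (-a)))⁻¹ :=
      add_le_add hx hy
    _ = ENNReal.ofReal (2 / (1 - 2 ^ (-a))) := by
      rw [← ENNReal.ofReal_one, ← ENNReal.ofReal_sub _ (by positivity),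
        ← ENNReal.ofReal_inv_of_pos (sub_pos.2 hq), ← two_mul, div_eq_mul_inv,
        ENNReal.ofReal_mul zero_le_two, ENNReal.ofReal_ofNat]

end DetourRatio

section Doubling

/-- `μ` is doubling with constant `K` and exponent `d`. The relation `d = log₂ K` of a
`(K, d)`-doubling measure is not part of the definition. -/
def IsDoublingWith {M : Type*} [PseudoMetricSpace M] [MeasurableSpace M] (μ : Measure M)
    (K d : ℝ) : Prop :=
  ∀ (x : M) (r lam : ℝ), 0 < r → 1 ≤ lam →
    μ (ball x (lam * r)) ≤ ENNReal.ofReal (K * lam ^ d) * μ (ball x r)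

variable {M : Type*} [PseudoMetricSpace M] [MeasurableSpace M] {μ : Measure M} {K d : ℝ}

theorem IsDoublingWith.measure_ball_rpow_neg_le (hμ : IsDoublingWith μ K d) (hK : 0 < K)
    (x : M) {r R p : ℝ} (hr : 0 < r) (hrR : r ≤ R) (hp : 0 ≤ p) :
    μ (ball x r) ^ (-p) ≤ ENNReal.ofReal ((K * (R / r) ^ d) ^ p) * μ (ball x R) ^ (-p) := by
  have hR : 0 < R := hr.trans_le hrR
  have hfactor : 0 < K * (R / r) ^ d := by positivity
  have hdoub := hμ x r (R / r) hr ((one_le_div hr).2 hrR)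
  rw [div_mul_cancel₀ R hr.ne'] at hdoub
  rw [← ENNReal.ofReal_rpow_of_nonneg hfactor.le hp]
  exact ennreal_rpow_neg_le_of_le_mul hp (ENNReal.ofReal_pos.2 hfactor).ne' ENNReal.ofReal_ne_top
    hdoub

theorem doubling_factors_mul {N s t : ℝ} (hK : 0 ≤ K) (hN : 0 ≤ N) (hs : 0 < s) (ht : 0 < t) :
    (K * (t / s) ^ d) ^ (1 / 2 : ℝ) * (K * (N * t / s) ^ d) ^ (1 / 2 : ℝ) *
        (K * (N * t / t) ^ d) ^ (1 / 2 : ℝ) =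
      K ^ (3 / 2 : ℝ) * (N * (t / s)) ^ d := by
  have hprod : (K * (t / s) ^ d) * (K * (N * t / s) ^ d) * (K * (N * t / t) ^ d) =
      K ^ 3 * ((N * (t / s)) ^ d) ^ 2 := by
    rw [mul_div_assoc, mul_div_cancel_right₀ N ht.ne', Real.mul_rpow hN (by positivity)]
    ring
  rw [← Real.mul_rpow (by positivity) (by positivity),
    ← Real.mul_rpow (by positivity) (by positivity), hprod,
    Real.mul_rpow (by positivity) (by positivity), ← Real.sqrt_eq_rpow (_ ^ 2),
    Real.sqrt_sq (by positivity), ← Real.rpow_natCast_mul hK]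
  norm_num

theorem IsDoublingWith.measure_ball_rpow_mul_le [μ.IsOpenPosMeasure] (hμ : IsDoublingWith μ K d)
    (hK : 0 < K) {N s t : ℝ} (hN : 1 ≤ N) (hs : 0 < s) (hst : s ≤ t) (x y z : M) :
    (μ (ball x s) * μ (ball z s)) ^ (-(1 / 2 : ℝ)) *
        (μ (ball z t) * μ (ball y t)) ^ (-(1 / 2 : ℝ)) ≤
      ENNReal.ofReal (K ^ (3 / 2 : ℝ) * (N * (t / s)) ^ d) *
        (μ (ball x t) * μ (ball y t)) ^ (-(1 / 2 : ℝ)) / μ (ball z (N * t)) := by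
  have ht : 0 < t := hs.trans_le hst
  have htN : t ≤ N * t := le_mul_of_one_le_left ht.le hN
  have hpos (p : M) {r : ℝ} (hr : 0 < r) : μ (ball p r) ≠ 0 := (measure_ball_pos μ p hr).ne'
  have hsq : μ (ball z (N * t)) ^ (-(1 / 2 : ℝ)) * μ (ball z (N * t)) ^ (-(1 / 2 : ℝ)) =
      (μ (ball z (N * t)))⁻¹ := by
    rw [← sq, ← ENNReal.rpow_mul_natCast]
    norm_num [ENNReal.rpow_neg_one]
  rw [ENNReal.mul_rpow_of_ne_zero (hpos x hs) (hpos z hs),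
    ENNReal.mul_rpow_of_ne_zero (hpos z ht) (hpos y ht),
    ENNReal.mul_rpow_of_ne_zero (hpos x ht) (hpos y ht)]
  calc _ ≤ ENNReal.ofReal ((K * (t / s) ^ d) ^ (1 / 2 : ℝ)) * μ (ball x t) ^ (-(1 / 2 : ℝ)) *
          (ENNReal.ofReal ((K * (N * t / s) ^ d) ^ (1 / 2 : ℝ)) *
            μ (ball z (N * t)) ^ (-(1 / 2 : ℝ))) *
        (ENNReal.ofReal ((K * (N * t / t) ^ d) ^ (1 / 2 : ℝ)) *
            μ (ball z (N * t)) ^ (-(1 / 2 : ℝ)) * μ (ball y t) ^ (-(1 / 2 : ℝ))) := by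
        gcongr
        · exact hμ.measure_ball_rpow_neg_le hK x hs hst one_half_pos.le
        · exact hμ.measure_ball_rpow_neg_le hK z hs (hst.trans htN) one_half_pos.le
        · exact hμ.measure_ball_rpow_neg_le hK z ht htN one_half_pos.le
    _ = _ := by
        rw [← doubling_factors_mul hK.le (zero_le_one.trans hN) hs ht, div_eq_mul_inv _ (μ _),
          ← hsq, ENNReal.ofReal_mul (by positivity), ENNReal.ofReal_mul (by positivity)]
        ring

end Doubling

theorem isOpenPosMeasure_of_measure_ball_pos {M : Type*} [PseudoMetricSpace M] [MeasurableSpace M]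
    {μ : Measure M} (h : ∀ (x : M) (r : ℝ), 0 < r → 0 < μ (ball x r)) : μ.IsOpenPosMeasure where
  open_pos _ hU := fun ⟨x, hx⟩ =>
    let ⟨r, hr, hrU⟩ := Metric.isOpen_iff.1 hU x hx
    ((h x r hr).trans_le (measure_mono hrU)).ne'

section Kernel

variable {M : Type*} [MetricSpace M] [MeasurableSpace M] {μ : Measure M} {K d σ s t : ℝ}

theorem Dkernel_comm (μ : Measure M) (δ σ : ℝ) (x y : M) :
    Dkernel μ δ σ x y = Dkernel μ δ σ y x := by
  rw [Dkernel, Dkernel, mul_comm (μ (ball x δ)), dist_comm]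

theorem Dkernel_ne_top [μ.IsOpenPosMeasure] {δ : ℝ} (hδ : 0 < δ) (σ : ℝ) (x y : M) :
    Dkernel μ δ σ x y ≠ ⊤ := by
  have hprod : μ (ball x δ) * μ (ball y δ) ≠ 0 :=
    mul_ne_zero (measure_ball_pos μ x hδ).ne' (measure_ball_pos μ y hδ).ne'
  refine ENNReal.mul_ne_top ?_ ENNReal.ofReal_ne_top
  rw [ENNReal.rpow_neg]
  exact ENNReal.inv_ne_top.2 (by simp [hprod])

theorem Dkernel_mul_Dkernel_le [μ.IsOpenPosMeasure] (hμ : IsDoublingWith μ K d) (hK : 0 < K)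
    (hσ : 0 ≤ σ) (hs : 0 < s) (hst : s ≤ t) (x y z : M) :
    Dkernel μ s σ x z * Dkernel μ t σ z y ≤
      ENNReal.ofReal (K ^ (3 / 2 : ℝ) * (11 / 4) ^ d * 2 ^ σ * (t / s) ^ d) * Dkernel μ t σ x y *
        (ENNReal.ofReal (detourRatio t x y z ^ (-(σ - d))) /
          μ (ball z (11 / 4 * detourRatio t x y z * t))) := by
  have ht : 0 < t := hs.trans_le hst
  have hX : 1 ≤ detourRatio t x y z := one_le_detourRatio ht x y z
  have hconst : K ^ (3 / 2 : ℝ) * (11 / 4 * detourRatio t x y z * (t / s)) ^ d *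
        (2 ^ σ * (1 + dist x y / t) ^ (-σ) * detourRatio t x y z ^ (-σ)) =
      K ^ (3 / 2 : ℝ) * (11 / 4) ^ d * 2 ^ σ * (t / s) ^ d * (1 + dist x y / t) ^ (-σ) *
        detourRatio t x y z ^ (-(σ - d)) := by
    rw [Real.mul_rpow (by positivity) (by positivity), Real.mul_rpow (by norm_num) (by positivity),
      neg_sub, sub_eq_add_neg, Real.rpow_add (by positivity)]
    ring
  calc Dkernel μ s σ x z * Dkernel μ t σ z y
      = ((μ (ball x s) * μ (ball z s)) ^ (-(1 / 2 : ℝ)) *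
          (μ (ball z t) * μ (ball y t)) ^ (-(1 / 2 : ℝ))) *
        ENNReal.ofReal ((1 + dist x z / s) ^ (-σ) * (1 + dist z y / t) ^ (-σ)) := by
        rw [Dkernel, Dkernel, mul_mul_mul_comm, ENNReal.ofReal_mul (by positivity)]
    _ ≤ ENNReal.ofReal (K ^ (3 / 2 : ℝ) * (11 / 4 * detourRatio t x y z * (t / s)) ^ d) *
          (μ (ball x t) * μ (ball y t)) ^ (-(1 / 2 : ℝ)) /
            μ (ball z (11 / 4 * detourRatio t x y z * t)) *
        ENNReal.ofReal (2 ^ σ * (1 + dist x y / t) ^ (-σ) * detourRatio t x y z ^ (-σ)) := by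
        refine mul_le_mul' (hμ.measure_ball_rpow_mul_le hK (by linarith) hs hst x y z) ?_
        exact ENNReal.ofReal_le_ofReal (rpow_neg_mul_rpow_neg_le_detourRatio hs hst hσ x y z)
    _ = ENNReal.ofReal (K ^ (3 / 2 : ℝ) * (11 / 4 * detourRatio t x y z * (t / s)) ^ d *
          (2 ^ σ * (1 + dist x y / t) ^ (-σ) * detourRatio t x y z ^ (-σ))) *
        ((μ (ball x t) * μ (ball y t)) ^ (-(1 / 2 : ℝ)) /
            μ (ball z (11 / 4 * detourRatio t x y z * t))) := by
        rw [mul_div_assoc, mul_right_comm, ← ENNReal.ofReal_mul (by positivity)]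
    _ = _ := by
        rw [hconst, ENNReal.ofReal_mul (by positivity), ENNReal.ofReal_mul (by positivity),
          Dkernel]
        simp only [div_eq_mul_inv _ (μ _)]
        ring

theorem lintegral_Dkernel_mul_Dkernel_le_of_le [μ.IsOpenPosMeasure] (hμ : IsDoublingWith μ K d)
    (hK : 0 < K) (hσ : 0 ≤ σ) (hdσ : d < σ) (hs : 0 < s) (hst : s ≤ t) (x y : M) :
    ∫⁻ z, Dkernel μ s σ x z * Dkernel μ t σ z y ∂μ ≤
      ENNReal.ofReal (K ^ (3 / 2 : ℝ) * (11 / 4) ^ d * 2 ^ (σ + 1) / (1 - 2 ^ (d - σ)) *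
        (t / s) ^ d) * Dkernel μ t σ x y := by
  have ht : 0 < t := hs.trans_le hst
  calc _ ≤ ∫⁻ z, _ ∂μ := lintegral_mono (Dkernel_mul_Dkernel_le hμ hK hσ hs hst x y)
    _ = ENNReal.ofReal (K ^ (3 / 2 : ℝ) * (11 / 4) ^ d * 2 ^ σ * (t / s) ^ d) *
        Dkernel μ t σ x y * _ :=
      lintegral_const_mul' _ _ (ENNReal.mul_ne_top ENNReal.ofReal_ne_top (Dkernel_ne_top ht σ x y))
    _ ≤ ENNReal.ofReal (K ^ (3 / 2 : ℝ) * (11 / 4) ^ d * 2 ^ σ * (t / s) ^ d) *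
        Dkernel μ t σ x y * ENNReal.ofReal (2 / (1 - 2 ^ (-(σ - d)))) := by
      gcongr
      exact lintegral_detourRatio_le μ ht (sub_pos.2 hdσ) x y
    _ = _ := by
      rw [mul_right_comm, ← ENNReal.ofReal_mul (by positivity), neg_sub,
        Real.rpow_add_one two_ne_zero]
      ring_nf

theorem stmt_3_general [μ.IsOpenPosMeasure] (hμ : IsDoublingWith μ K d)
    (hK : 0 < K) (hσ : 0 ≤ σ) (hdσ : d < σ) (hs : 0 < s) (ht : 0 < t) (x y : M) :
    ∫⁻ z, Dkernel μ s σ x z * Dkernel μ t σ z y ∂μ ≤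
      ENNReal.ofReal (K ^ (3 / 2 : ℝ) * (11 / 4) ^ d * 2 ^ (σ + 1) / (1 - 2 ^ (d - σ)) *
        max ((s / t) ^ d) ((t / s) ^ d)) * Dkernel μ (max s t) σ x y := by
  wlog hst : s ≤ t generalizing s t x y
  · simpa only [Dkernel_comm μ _ σ y, Dkernel_comm μ _ σ _ x, mul_comm, max_comm] using
      this ht hs y x (le_of_not_ge hst)
  rw [max_eq_right hst]
  refine (lintegral_Dkernel_mul_Dkernel_le_of_le hμ hK hσ hdσ hs hst x y).trans ?_
  have : 0 < 1 - (2 : ℝ) ^ (d - σ) :=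
    sub_pos.2 (Real.rpow_lt_one_of_one_lt_of_neg one_lt_two (sub_neg.2 hdσ))
  gcongr
  exact le_max_right _ _

end Kernel

theorem eleven_quarters_rpow_le {d : ℝ} (hd : 0 ≤ d) :
    (11 / 4 : ℝ) ^ d ≤ ((2 : ℝ) ^ d) ^ (3 / 2 : ℝ) := by
  have hbase : (11 / 4 : ℝ) ≤ 2 ^ (3 / 2 : ℝ) := by
    rw [show (3 / 2 : ℝ) = (3 : ℕ) * (1 / 2) by norm_num, Real.rpow_natCast_mul zero_le_two,
      ← Real.sqrt_eq_rpow]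
    exact Real.le_sqrt_of_sq_le (by norm_num)
  rw [← Real.rpow_mul zero_le_two, mul_comm d, Real.rpow_mul zero_le_two]
  exact Real.rpow_le_rpow (by norm_num) hbase hd

theorem rpow_three_halves_mul_eleven_quarters_rpow_le {K d : ℝ} (hd : 0 ≤ d) (hKd : K = 2 ^ d) :
    K ^ (3 / 2 : ℝ) * (11 / 4) ^ d ≤ K ^ 2 * 2 ^ d := by
  have hK : 0 ≤ K := hKd ▸ by positivity
  calc K ^ (3 / 2 : ℝ) * (11 / 4) ^ d ≤ K ^ (3 / 2 : ℝ) * K ^ (3 / 2 : ℝ) := by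
        gcongr
        exact hKd ▸ eleven_quarters_rpow_le hd
    _ = K ^ 3 := by
        rw [← Real.mul_rpow hK hK, ← sq, ← Real.rpow_natCast_mul hK]
        norm_num
    _ = K ^ 2 * 2 ^ d := by rw [← hKd, pow_succ]

theorem stmt_3 {M : Type*} [MetricSpace M] [MeasurableSpace M] [BorelSpace M]
    (μ : Measure M)
    (hball : ∀ (x : M) (r : ℝ), 0 < r → 0 < μ (ball x r) ∧ μ (ball x r) < ⊤)
    (K d : ℝ) (hK : 1 < K) (hd : d = Real.logb 2 K)
    (hdoub : ∀ (x : M) (r lam : ℝ), 0 < r → 1 ≤ lam →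
      μ (ball x (lam * r)) ≤ ENNReal.ofReal (K * lam ^ d) * μ (ball x r))
    (σ : ℝ) (hσ : d < σ) :
    ∀ (s t : ℝ), 0 < s → 0 < t → ∀ x y : M,
      (∫⁻ z, Dkernel μ s σ x z * Dkernel μ t σ z y ∂μ) ≤
        ENNReal.ofReal (K ^ 2 * (2:ℝ) ^ (d + σ + 1) / (1 - (2:ℝ) ^ (d - σ)) *
            max ((s / t) ^ d) ((t / s) ^ d)) *
          Dkernel μ (max s t) σ x y := by
  intro s t hs ht x y
  have hd₀ : 0 < d := hd ▸ Real.logb_pos one_lt_two hK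
  have hKd : K = 2 ^ d := by
    rw [hd, Real.rpow_logb two_pos (by norm_num) (zero_lt_one.trans hK)]
  have hq : 0 ≤ 1 - (2 : ℝ) ^ (d - σ) :=
    sub_nonneg.2 (Real.rpow_le_one_of_one_le_of_nonpos one_le_two (sub_nonpos.2 hσ.le))
  have : μ.IsOpenPosMeasure :=
    isOpenPosMeasure_of_measure_ball_pos fun x r hr => (hball x r hr).1
  refine (stmt_3_general hdoub (zero_lt_one.trans hK) (hd₀.trans hσ).le hσ hs ht x y).trans ?_
  rw [add_assoc, Real.rpow_add two_pos d, ← mul_assoc]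
  gcongr ENNReal.ofReal (?_ * _ / _ * _) * _
  exact rpow_three_halves_mul_eleven_quarters_rpow_le hd₀.le hKd
end

section
/- Let μ be a (K,d)-doubling Borel measure on a metric space (M,ρ) endowed with a Christ dyadic cube system with parameter δ ∈ (0,1) and with the level-j₀ subcube families. Let s ∈ ℝ, τ ∈ [0,∞), p ∈ (0,∞] and q ∈ (0,∞]. Then there exists a constant C ≥ 1 such that for every family a = {a_t^{j,ν}}_{j∈ℤ₊, t∈I_j, 1≤ν≤N_t^j} of complex numbers: ‖a‖_{b̃^{s+dτ−d/p}_{∞,∞}} ≤ C·‖a‖_{b̃^{s,τ}_{p,q}}. -/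
open MeasureTheory Metric
open scoped ENNReal

/-- A Christ dyadic cube system on a metric measure space `(M, ρ, μ)`. -/
structure ChristSystem (M : Type*) [MetricSpace M] [MeasurableSpace M] (μ : Measure M) where
  δ : ℝ
  δ_pos : 0 < δ
  δ_lt_one : δ < 1
  cSmall : ℝ
  cBig : ℝ
  cSmall_pos : 0 < cSmall
  cSmall_lt_cBig : cSmall < cBig
  I : ℤ → Type
  countable_I : ∀ j : ℤ, Countable (I j)
  Q : (j : ℤ) → I j → Set M
  center : (j : ℤ) → I j → M
  isOpen_Q : ∀ (j : ℤ) (α : I j), IsOpen (Q j α)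
  cover : ∀ j : ℤ, μ (Set.univ \ ⋃ α : I j, Q j α) = 0
  disjoint_Q : ∀ (j : ℤ) (α β : I j), α ≠ β → Q j α ∩ Q j β = ∅
  nested : ∀ (j ℓ : ℤ), j ≤ ℓ → ∀ (α : I j) (β : I ℓ), Q ℓ β ⊆ Q j α ∨ Q ℓ β ∩ Q j α = ∅
  parent : ∀ (j : ℤ) (α : I j) (ℓ : ℤ), ℓ < j → ∃! β : I ℓ, Q j α ⊆ Q ℓ β
  diam_le : ∀ (j : ℤ) (α : I j), EMetric.diam (Q j α) ≤ ENNReal.ofReal (cBig * δ ^ j)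
  ball_subset : ∀ (j : ℤ) (α : I j), ball (center j α) (cSmall * δ ^ j) ⊆ Q j α

/-- The `ℓ^q` norm (with `q ∈ (0,∞]`, usual modification when `q = ∞`) of a
sequence of extended nonnegative reals. -/
noncomputable def seqLq (q : ℝ≥0∞) (a : ℕ → ℝ≥0∞) : ℝ≥0∞ :=
  if q = ⊤ then ⨆ j, a j else (∑' j, a j ^ q.toReal) ^ (1 / q.toReal)

/-- The `L^p` quantity `(∫_A g^p dμ)^{1/p}` (ess sup over `A` when `p = ∞`) for a
nonnegative function `g`. -/
noncomputable def lpOn {M : Type*} [MetricSpace M] [MeasurableSpace M]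
    (μ : Measure M) (p : ℝ≥0∞) (A : Set M) (g : M → ℝ≥0∞) : ℝ≥0∞ :=
  if p = ⊤ then essSup g (μ.restrict A)
  else (∫⁻ x in A, g x ^ p.toReal ∂μ) ^ (1 / p.toReal)

/-- The `ℓ^q(L^p_τ)` norm of a sequence of nonnegative functions:
`sup_{k ∈ ℤ, α ∈ I_k} μ(Q_α^k)^{-τ} ( ∑_{j = max(k,0)}^∞ ( ∫_{Q_α^k} g_j^p dμ )^{q/p} )^{1/q}`. -/
noncomputable def bNorm {M : Type*} [MetricSpace M] [MeasurableSpace M] {μ : Measure M}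
    (S : ChristSystem M μ) (p q : ℝ≥0∞) (τ : ℝ) (g : ℕ → M → ℝ≥0∞) : ℝ≥0∞ :=
  ⨆ (k : ℤ) (α : S.I k), μ (S.Q k α) ^ (-τ) *
    seqLq q (fun j => if k.toNat ≤ j then lpOn μ p (S.Q k α) (g j) else 0)

/-- The `L^p_τ(ℓ^q)` norm of a sequence of nonnegative functions:
`sup_{k ∈ ℤ, α ∈ I_k} μ(Q_α^k)^{-τ} ( ∫_{Q_α^k} ( ∑_{j = max(k,0)}^∞ g_j^q )^{p/q} dμ )^{1/p}`. -/
noncomputable def fNorm {M : Type*} [MetricSpace M] [MeasurableSpace M] {μ : Measure M}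
    (S : ChristSystem M μ) (p q : ℝ≥0∞) (τ : ℝ) (g : ℕ → M → ℝ≥0∞) : ℝ≥0∞ :=
  ⨆ (k : ℤ) (α : S.I k), μ (S.Q k α) ^ (-τ) *
    lpOn μ p (S.Q k α) (fun x => seqLq q (fun j => if k.toNat ≤ j then g j x else 0))

/-- The index type of the level-`(j+j₀)` subcubes of the cube `Q_t^j`. -/
def SubIdx {M : Type*} [MetricSpace M] [MeasurableSpace M] {μ : Measure M}
    (S : ChristSystem M μ) (j₀ : ℕ) (j : ℕ) (t : S.I j) : Type :=
  {β : S.I ((j : ℤ) + j₀) // S.Q ((j : ℤ) + j₀) β ⊆ S.Q (j : ℤ) t}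

/-- The subcube `Q_t^{j,ν}`. -/
def SubQ {M : Type*} [MetricSpace M] [MeasurableSpace M] {μ : Measure M}
    (S : ChristSystem M μ) (j₀ : ℕ) (j : ℕ) (t : S.I j) (ν : SubIdx S j₀ j t) : Set M :=
  S.Q ((j : ℤ) + j₀) ν.1

/-- The level-`j` function `x ↦ ∑_{t ∈ I_j} ∑_{ν} w_t^{j,ν} |a_t^{j,ν}| χ_{E_t^{j,ν}}(x)`
associated with a coefficient family `a`, a weight family `w` and a family of sets `E`. -/
noncomputable def seqFunOn {M : Type*} [MetricSpace M] [MeasurableSpace M] {μ : Measure M}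
    (S : ChristSystem M μ) (j₀ : ℕ)
    (w : (j : ℕ) → (t : S.I j) → SubIdx S j₀ j t → ℝ≥0∞)
    (E : (j : ℕ) → (t : S.I j) → SubIdx S j₀ j t → Set M)
    (a : (j : ℕ) → (t : S.I j) → SubIdx S j₀ j t → ℂ) (j : ℕ) (x : M) : ℝ≥0∞ :=
  ∑' (t : S.I j) (ν : SubIdx S j₀ j t),
    w j t ν * (‖a j t ν‖₊ : ℝ≥0∞) * (E j t ν).indicator (fun _ => (1 : ℝ≥0∞)) x

/-- The level-`j` function `x ↦ ∑_{t ∈ I_j} ∑_{ν} w_t^{j,ν} |a_t^{j,ν}| χ_{Q_t^{j,ν}}(x)`. -/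
noncomputable def seqFun {M : Type*} [MetricSpace M] [MeasurableSpace M] {μ : Measure M}
    (S : ChristSystem M μ) (j₀ : ℕ)
    (w : (j : ℕ) → (t : S.I j) → SubIdx S j₀ j t → ℝ≥0∞)
    (a : (j : ℕ) → (t : S.I j) → SubIdx S j₀ j t → ℂ) (j : ℕ) (x : M) : ℝ≥0∞ :=
  seqFunOn S j₀ w (fun j t ν => SubQ S j₀ j t ν) a j x

/-- The weight `δ^{-js}` used for the sequence spaces `b^{s,τ}_{p,q}` and `f^{s,τ}_{p,q}`. -/
noncomputable def deltaWeight {M : Type*} [MetricSpace M] [MeasurableSpace M] {μ : Measure M}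
    (S : ChristSystem M μ) (j₀ : ℕ) (s : ℝ) :
    (j : ℕ) → (t : S.I j) → SubIdx S j₀ j t → ℝ≥0∞ :=
  fun j _ _ => ENNReal.ofReal (S.δ ^ (-(j : ℝ) * s))

/-- The weight `μ(Q_t^{j,ν})^{-s/d}` used for the sequence spaces `b̃^{s,τ}_{p,q}`
and `f̃^{s,τ}_{p,q}`. -/
noncomputable def tildeWeight {M : Type*} [MetricSpace M] [MeasurableSpace M] {μ : Measure M}
    (S : ChristSystem M μ) (j₀ : ℕ) (d s : ℝ) :
    (j : ℕ) → (t : S.I j) → SubIdx S j₀ j t → ℝ≥0∞ :=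
  fun j t ν => μ (SubQ S j₀ j t ν) ^ (-(s / d))

/-!
On a subcube `Q_t^{j,ν}` the level-`j` function is the constant `μ(Q_t^{j,ν})^{-s/d} |a_t^{j,ν}|`,
so the single term of the `b̃^{s,τ}_{p,q}` norm with `k = j` and `α = t` already dominates
`μ(Q_t^j)^{-τ} μ(Q_t^{j,ν})^{-s/d+1/p} |a_t^{j,ν}|`. By doubling, `μ(Q_t^j)` and `μ(Q_t^{j,ν})` are
comparable with a constant that depends only on the doubling constant, on `j₀` and on the cube
system, and replacing the former by the latter gives the weight of `b̃^{s+dτ-d/p}_{∞,∞}`.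
-/

section

open scoped NNReal

theorem rpow_le_rpow_abs_mul_rpow {x y : ℝ≥0∞} {L : ℝ≥0} (hL : L ≠ 0) (hxy : x ≤ L * y)
    (hyx : y ≤ L * x) (σ : ℝ) : x ^ σ ≤ (L : ℝ≥0∞) ^ |σ| * y ^ σ := by
  rcases le_total 0 σ with hσ | hσ
  · rw [abs_of_nonneg hσ, ← ENNReal.mul_rpow_of_nonneg _ _ hσ]
    exact ENNReal.rpow_le_rpow hxy hσ
  · have hinv : x⁻¹ ≤ L * y⁻¹ :=
      calc x⁻¹ = L * (L * x)⁻¹ := by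
            rw [ENNReal.mul_inv (.inl (by simpa using hL)) (.inl ENNReal.coe_ne_top), ← mul_assoc,
              ENNReal.mul_inv_cancel (by simpa using hL) ENNReal.coe_ne_top, one_mul]
        _ ≤ L * y⁻¹ := by gcongr
    have hpow := ENNReal.rpow_le_rpow hinv (neg_nonneg.2 hσ)
    rwa [ENNReal.mul_rpow_of_nonneg _ _ (neg_nonneg.2 hσ), ENNReal.inv_rpow, ENNReal.inv_rpow,
      ← ENNReal.rpow_neg, ← ENNReal.rpow_neg, neg_neg, ← abs_of_nonpos hσ] at hpow

section Doubling

variable {X : Type*} [PseudoMetricSpace X] [MeasurableSpace X] {μ : Measure X} {K : ℝ≥0}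

theorem measure_ball_two_pow_mul_le
    (hdoub : ∀ (x : X) (r : ℝ), 0 < r → μ (ball x (2 * r)) ≤ K * μ (ball x r))
    (n : ℕ) (x : X) {r : ℝ} (hr : 0 < r) :
    μ (ball x (2 ^ n * r)) ≤ (K : ℝ≥0∞) ^ n * μ (ball x r) := by
  induction n with
  | zero => simp
  | succ n ih =>
    calc μ (ball x (2 ^ (n + 1) * r)) = μ (ball x (2 * (2 ^ n * r))) := by
          rw [pow_succ', mul_assoc]
      _ ≤ K * μ (ball x (2 ^ n * r)) := hdoub x _ (by positivity)
      _ ≤ K * ((K : ℝ≥0∞) ^ n * μ (ball x r)) := by gcongr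
      _ = (K : ℝ≥0∞) ^ (n + 1) * μ (ball x r) := by rw [pow_succ', mul_assoc]

theorem exists_measure_ball_mul_le
    (hdoub : ∀ (x : X) (r : ℝ), 0 < r → μ (ball x (2 * r)) ≤ K * μ (ball x r)) (lam : ℝ) :
    ∃ L : ℝ≥0, 1 ≤ L ∧ ∀ (x : X) (r : ℝ), 0 < r → μ (ball x (lam * r)) ≤ L * μ (ball x r) := by
  obtain ⟨n, hn⟩ := pow_unbounded_of_one_lt lam one_lt_two
  refine ⟨max 1 (K ^ n), le_max_left _ _, fun x r hr => ?_⟩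
  calc μ (ball x (lam * r)) ≤ μ (ball x (2 ^ n * r)) := by gcongr
    _ ≤ (K : ℝ≥0∞) ^ n * μ (ball x r) := measure_ball_two_pow_mul_le hdoub n x hr
    _ ≤ (max 1 (K ^ n) : ℝ≥0) * μ (ball x r) := by
      gcongr
      exact_mod_cast le_max_right 1 (K ^ n)

end Doubling

variable {M : Type*} [MetricSpace M] [MeasurableSpace M] {μ : Measure M}

namespace ChristSystem

variable (S : ChristSystem M μ)

theorem cBig_mul_zpow_pos (j : ℤ) : 0 < S.cBig * S.δ ^ j :=
  mul_pos (S.cSmall_pos.trans S.cSmall_lt_cBig) (zpow_pos S.δ_pos j)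

theorem cSmall_mul_zpow_pos (j : ℤ) : 0 < S.cSmall * S.δ ^ j :=
  mul_pos S.cSmall_pos (zpow_pos S.δ_pos j)

variable {S}

theorem eq_of_mem_Q {j : ℤ} {α β : S.I j} {x : M} (hα : x ∈ S.Q j α) (hβ : x ∈ S.Q j β) :
    α = β := by
  by_contra hne
  exact (S.disjoint_Q j α β hne).subset ⟨hα, hβ⟩

theorem Q_subset_ball {j : ℤ} {α : S.I j} {x : M} {r : ℝ} (hx : x ∈ S.Q j α)
    (hr : S.cBig * S.δ ^ j < r) : S.Q j α ⊆ ball x r := by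
  intro y hy
  have hxy : edist y x ≤ ENNReal.ofReal (S.cBig * S.δ ^ j) :=
    (Metric.edist_le_ediam_of_mem hy hx).trans (S.diam_le j α)
  rw [edist_dist, ENNReal.ofReal_le_ofReal_iff (S.cBig_mul_zpow_pos j).le] at hxy
  exact hxy.trans_lt hr

variable (S)

theorem center_mem_Q (j : ℤ) (α : S.I j) : S.center j α ∈ S.Q j α :=
  S.ball_subset j α (mem_ball_self (S.cSmall_mul_zpow_pos j))

theorem measure_Q_pos (hpos : ∀ (x : M) (r : ℝ), 0 < r → 0 < μ (ball x r)) (j : ℤ) (α : S.I j) :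
    0 < μ (S.Q j α) :=
  (hpos _ _ (S.cSmall_mul_zpow_pos j)).trans_le (measure_mono (S.ball_subset j α))

theorem measure_Q_lt_top (hfin : ∀ (x : M) (r : ℝ), 0 < r → μ (ball x r) < ⊤) (j : ℤ)
    (α : S.I j) : μ (S.Q j α) < ⊤ :=
  (measure_mono (Q_subset_ball (S.center_mem_Q j α) (lt_add_one _))).trans_lt
    (hfin _ _ (add_pos (S.cBig_mul_zpow_pos j) one_pos))

theorem exists_measure_Q_le_of_subset {K : ℝ≥0}
    (hdoub : ∀ (x : M) (r : ℝ), 0 < r → μ (ball x (2 * r)) ≤ K * μ (ball x r)) (n : ℤ) :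
    ∃ L : ℝ≥0, 1 ≤ L ∧ ∀ (j : ℤ) (α : S.I j) (β : S.I (j + n)),
      S.Q (j + n) β ⊆ S.Q j α → μ (S.Q j α) ≤ L * μ (S.Q (j + n) β) := by
  obtain ⟨L, hL, hball⟩ :=
    exists_measure_ball_mul_le hdoub (2 * (S.cBig / (S.cSmall * S.δ ^ n)))
  refine ⟨L, hL, fun j α β hβα => ?_⟩
  have hradius : 2 * (S.cBig / (S.cSmall * S.δ ^ n)) * (S.cSmall * S.δ ^ (j + n)) =
      2 * (S.cBig * S.δ ^ j) := by
    have hc := S.cSmall_pos.ne'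
    have hδ := (zpow_pos S.δ_pos n).ne'
    rw [zpow_add₀ S.δ_pos.ne']
    field_simp
  calc μ (S.Q j α)
      ≤ μ (ball (S.center (j + n) β) (2 * (S.cBig * S.δ ^ j))) :=
        measure_mono <| Q_subset_ball (hβα (S.center_mem_Q _ β)) <|
          lt_two_mul_self (S.cBig_mul_zpow_pos j)
    _ ≤ L * μ (ball (S.center (j + n) β) (S.cSmall * S.δ ^ (j + n))) := by
        rw [← hradius]
        exact hball _ _ (S.cSmall_mul_zpow_pos _)
    _ ≤ L * μ (S.Q (j + n) β) := by
        gcongr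
        exact S.ball_subset _ β

theorem exists_measure_Q_rpow_le_of_subset {K : ℝ≥0}
    (hdoub : ∀ (x : M) (r : ℝ), 0 < r → μ (ball x (2 * r)) ≤ K * μ (ball x r)) (n : ℤ) (σ : ℝ) :
    ∃ L : ℝ≥0, 1 ≤ L ∧ ∀ (j : ℤ) (α : S.I j) (β : S.I (j + n)),
      S.Q (j + n) β ⊆ S.Q j α → μ (S.Q (j + n) β) ^ σ ≤ L * μ (S.Q j α) ^ σ := by
  obtain ⟨L, hL, hparent⟩ := S.exists_measure_Q_le_of_subset hdoub n
  refine ⟨L ^ |σ|, NNReal.one_le_rpow hL (abs_nonneg σ), fun j α β hβα => ?_⟩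
  rw [ENNReal.coe_rpow_of_nonneg _ (abs_nonneg σ)]
  exact rpow_le_rpow_abs_mul_rpow (one_pos.trans_le hL).ne'
    ((measure_mono hβα).trans (le_mul_of_one_le_left' (by exact_mod_cast hL)))
    (hparent j α β hβα) σ

end ChristSystem

theorem le_seqLq {q : ℝ≥0∞} (hq : q ≠ 0) (a : ℕ → ℝ≥0∞) (j : ℕ) : a j ≤ seqLq q a := by
  unfold seqLq
  split_ifs with hq_top
  · exact le_iSup a j
  · rw [one_div, ENNReal.le_rpow_inv_iff (ENNReal.toReal_pos hq hq_top)]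
    exact ENNReal.le_tsum (f := fun i => a i ^ q.toReal) j

theorem mul_measure_rpow_le_lpOn {p : ℝ≥0∞} (hp : p ≠ 0) {A B : Set M} (hBA : B ⊆ A)
    (hB : MeasurableSet B) (hμB : μ B ≠ 0) {g : M → ℝ≥0∞} {c : ℝ≥0∞} (hg : ∀ x ∈ B, c ≤ g x) :
    c * μ B ^ (1 / p.toReal) ≤ lpOn μ p A g := by
  unfold lpOn
  split_ifs with hp_top
  · simp only [hp_top, ENNReal.toReal_top, div_zero, ENNReal.rpow_zero, mul_one]
    by_contra! hlt
    have hae : ∀ᵐ x ∂μ.restrict B, g x < c :=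
      ae_mono (Measure.restrict_mono hBA le_rfl) (ae_lt_of_essSup_lt hlt)
    rw [ae_restrict_iff' hB] at hae
    exact hμB (measure_mono_null (t := {x | ¬(x ∈ B → g x < c)})
      (fun x hx hlt => (hlt hx).not_ge (hg x hx)) hae)
  · have hp_pos : 0 < p.toReal := ENNReal.toReal_pos hp hp_top
    rw [one_div, ENNReal.le_rpow_inv_iff hp_pos, ENNReal.mul_rpow_of_nonneg _ _ hp_pos.le,
      ENNReal.rpow_inv_rpow hp_pos.ne']
    calc c ^ p.toReal * μ B = ∫⁻ _ in B, c ^ p.toReal ∂μ := (setLIntegral_const _ _).symm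
      _ ≤ ∫⁻ x in B, g x ^ p.toReal ∂μ :=
          setLIntegral_mono' hB fun x hx => ENNReal.rpow_le_rpow (hg x hx) hp_pos.le
      _ ≤ ∫⁻ x in A, g x ^ p.toReal ∂μ := lintegral_mono_set hBA

section SequenceSpaces

variable {S : ChristSystem M μ} {j₀ : ℕ}

theorem rpow_neg_mul_lpOn_le_bNorm {q : ℝ≥0∞} (hq : q ≠ 0) (p : ℝ≥0∞) (τ : ℝ)
    (g : ℕ → M → ℝ≥0∞) {k : ℤ} (α : S.I k) {j : ℕ} (hkj : k ≤ j) :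
    μ (S.Q k α) ^ (-τ) * lpOn μ p (S.Q k α) (g j) ≤ bNorm S p q τ g := by
  have hterm := le_seqLq hq (fun i => if k.toNat ≤ i then lpOn μ p (S.Q k α) (g i) else 0) j
  rw [if_pos (Int.toNat_le.2 hkj)] at hterm
  unfold bNorm
  exact le_iSup₂_of_le k α (by gcongr)

section SeqFun

variable {w : (j : ℕ) → (t : S.I j) → SubIdx S j₀ j t → ℝ≥0∞}
  {a : (j : ℕ) → (t : S.I j) → SubIdx S j₀ j t → ℂ} {j : ℕ}

theorem seqFun_eq_of_mem {t : S.I j} {ν : SubIdx S j₀ j t} {x : M} (hx : x ∈ SubQ S j₀ j t ν) :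
    seqFun S j₀ w a j x = w j t ν * ‖a j t ν‖₊ := by
  unfold seqFun seqFunOn
  rw [tsum_eq_single t, tsum_eq_single ν]
  · simp [hx]
  · intro ν' hne
    have hx' : x ∉ SubQ S j₀ j t ν' := fun h =>
      hne (Subtype.ext (ChristSystem.eq_of_mem_Q h hx))
    simp [hx']
  · intro t' hne
    have hx' (ν' : SubIdx S j₀ j t') : x ∉ SubQ S j₀ j t' ν' := fun h =>
      hne (ChristSystem.eq_of_mem_Q (ν'.2 h) (ν.2 hx))
    simp [hx']

theorem seqFun_le_of_forall_le {c : ℝ≥0∞}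
    (h : ∀ (t : S.I j) (ν : SubIdx S j₀ j t), w j t ν * ‖a j t ν‖₊ ≤ c) (x : M) :
    seqFun S j₀ w a j x ≤ c := by
  by_cases hx : ∃ (t : S.I j) (ν : SubIdx S j₀ j t), x ∈ SubQ S j₀ j t ν
  · obtain ⟨t, ν, hx⟩ := hx
    exact (seqFun_eq_of_mem hx).trans_le (h t ν)
  · push Not at hx
    simp [seqFun, seqFunOn, hx]

theorem rpow_neg_mul_coeff_le_bNorm [OpensMeasurableSpace M] {p q : ℝ≥0∞} (hp : p ≠ 0)
    (hq : q ≠ 0) (τ : ℝ) {t : S.I j} {ν : SubIdx S j₀ j t} (hν : μ (SubQ S j₀ j t ν) ≠ 0) :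
    μ (S.Q j t) ^ (-τ) * (w j t ν * ‖a j t ν‖₊ * μ (SubQ S j₀ j t ν) ^ (1 / p.toReal)) ≤
      bNorm S p q τ (seqFun S j₀ w a) := by
  refine le_trans ?_ (rpow_neg_mul_lpOn_le_bNorm hq p τ _ t le_rfl)
  gcongr
  exact mul_measure_rpow_le_lpOn hp ν.2 (S.isOpen_Q _ _).measurableSet hν
    fun x hx => (seqFun_eq_of_mem hx).ge

end SeqFun

theorem tildeWeight_add_mul {d : ℝ} (hd : d ≠ 0) (s σ : ℝ) {j : ℕ} {t : S.I j}
    {ν : SubIdx S j₀ j t} (hpos : μ (SubQ S j₀ j t ν) ≠ 0) (htop : μ (SubQ S j₀ j t ν) ≠ ⊤) :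
    tildeWeight S j₀ d (s + d * σ) j t ν =
      tildeWeight S j₀ d s j t ν * μ (SubQ S j₀ j t ν) ^ (-σ) := by
  unfold tildeWeight
  rw [← ENNReal.rpow_add _ _ hpos htop]
  congr 1
  field_simp
  ring

end SequenceSpaces

theorem stmt_14_general [OpensMeasurableSpace M]
    (hball : ∀ (x : M) (r : ℝ), 0 < r → 0 < μ (ball x r) ∧ μ (ball x r) < ⊤) {K : ℝ≥0}
    (hdoub : ∀ (x : M) (r : ℝ), 0 < r → μ (ball x (2 * r)) ≤ K * μ (ball x r))
    (S : ChristSystem M μ) (j₀ : ℕ) {d : ℝ} (hd : d ≠ 0) (s τ : ℝ) {p q : ℝ≥0∞}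
    (hp : p ≠ 0) (hq : q ≠ 0) :
    ∃ C : ℝ, 1 ≤ C ∧
      ∀ a : (j : ℕ) → (t : S.I j) → SubIdx S j₀ j t → ℂ,
        (⨆ (j : ℕ) (x : M),
            seqFun S j₀ (tildeWeight S j₀ d (s + d * τ - d / p.toReal)) a j x)
          ≤ ENNReal.ofReal C * bNorm S p q τ (seqFun S j₀ (tildeWeight S j₀ d s) a) := by
  obtain ⟨C, hC, hQ⟩ := S.exists_measure_Q_rpow_le_of_subset hdoub j₀ (-τ)
  refine ⟨C, hC, fun a => iSup₂_le fun j => seqFun_le_of_forall_le fun t ν => ?_⟩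
  set A := μ (S.Q j t)
  set B := μ (SubQ S j₀ j t ν)
  have hB_pos : B ≠ 0 := (S.measure_Q_pos (fun x r hr => (hball x r hr).1) _ ν.1).ne'
  have hB_top : B ≠ ⊤ := (S.measure_Q_lt_top (fun x r hr => (hball x r hr).2) _ ν.1).ne
  have hweight : tildeWeight S j₀ d (s + d * τ - d / p.toReal) j t ν =
      tildeWeight S j₀ d s j t ν * B ^ (1 / p.toReal) * B ^ (-τ) := by
    rw [show s + d * τ - d / p.toReal = s + d * -(1 / p.toReal) + d * τ by ring,
      tildeWeight_add_mul hd _ _ hB_pos hB_top, tildeWeight_add_mul hd _ _ hB_pos hB_top, neg_neg]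
  rw [ENNReal.ofReal_coe_nnreal]
  calc tildeWeight S j₀ d (s + d * τ - d / p.toReal) j t ν * ‖a j t ν‖₊
      = B ^ (-τ) * (tildeWeight S j₀ d s j t ν * ‖a j t ν‖₊ * B ^ (1 / p.toReal)) := by
        rw [hweight]
        ring
    _ ≤ C * A ^ (-τ) * (tildeWeight S j₀ d s j t ν * ‖a j t ν‖₊ * B ^ (1 / p.toReal)) := by
        gcongr
        exact hQ j t ν.1 ν.2
    _ ≤ C * bNorm S p q τ (seqFun S j₀ (tildeWeight S j₀ d s) a) := by
        rw [mul_assoc]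
        gcongr
        exact rpow_neg_mul_coeff_le_bNorm hp hq τ hB_pos

end

theorem stmt_14 {M : Type*} [MetricSpace M] [MeasurableSpace M] [BorelSpace M]
    (μ : Measure M)
    (hball : ∀ (x : M) (r : ℝ), 0 < r → 0 < μ (ball x r) ∧ μ (ball x r) < ⊤)
    (K d : ℝ) (hK : 1 < K) (hd : d = Real.logb 2 K)
    (hdoub : ∀ (x : M) (r lam : ℝ), 0 < r → 1 ≤ lam →
      μ (ball x (lam * r)) ≤ ENNReal.ofReal (K * lam ^ d) * μ (ball x r))
    (S : ChristSystem M μ) (j₀ : ℕ)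
    (hfin : ∀ (j : ℕ) (t : S.I j), Finite (SubIdx S j₀ j t))
    (s τ : ℝ) (hτ : 0 ≤ τ)
    (p q : ℝ≥0∞) (hp : 0 < p) (hq : 0 < q) :
    ∃ C : ℝ, 1 ≤ C ∧
      ∀ a : (j : ℕ) → (t : S.I j) → SubIdx S j₀ j t → ℂ,
        (⨆ (j : ℕ) (x : M),
            seqFun S j₀ (tildeWeight S j₀ d (s + d * τ - d / p.toReal)) a j x)
          ≤ ENNReal.ofReal C * bNorm S p q τ (seqFun S j₀ (tildeWeight S j₀ d s) a) := by
  exact stmt_14_general hball (K := (K * 2 ^ d).toNNReal)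
    (fun x r hr => hdoub x r 2 hr one_le_two) S j₀ (hd ▸ (Real.logb_pos one_lt_two hK).ne')
    s τ hp.ne' hq.ne'
end
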